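/- Let k be a field, q ∈ k a nonzero element with q² ≠ 1, l ≥ 2 an integer, and suppose q^{4(l+1)} = 1. Define the quantum integer [n]_q = (qⁿ − q^{−n})/(q − q^{−1}) ∈ k. Then: (a) if q² = −1, the sum Σ_{i=0}^{l} ([2i+1]_q)² equals the image of l+1 in k; (b) if q⁴ ≠ 1, the sum Σ_{i=0}^{l} ([2i+1]_q)² equals −2(l+1)/(q − q^{−1})². -/

import Mathlib

/-- The quantum integer `[n]_q = (q^n - q^{-n})/(q - q^{-1})`. -/
noncomputable def qInt {k : Type*} [Field k] (q : k) (n : ℕ) : k :=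
  (q ^ (n : ℤ) - q ^ (-(n : ℤ))) / (q - q⁻¹)

/-!
For `q⁴ ≠ 1` the sum has a closed form valid for every number `n` of terms:
`∑_{i < n} [2i+1]_q² = ([2n]_{q²} - 2n) / (q - q⁻¹)²`.
Indeed `(q - q⁻¹)² [m]_q² = q^{2m} + q^{-2m} - 2`, and for `x = q²` the sum of
`x^{2i+1} + x^{-(2i+1)}` telescopes after multiplication by `x - x⁻¹`. When `q^{4n} = 1` the
quantum integer `[2n]_{q²}` vanishes. When `q² = -1`, instead, `[2i+1]_q = (-1)^i`.
-/

section QuantumIntegers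

variable {k : Type*} [Field k] {q : k}

lemma sub_inv_ne_zero_of_sq_ne_one (hq0 : q ≠ 0) (hq2 : q ^ 2 ≠ 1) : q - q⁻¹ ≠ 0 := by
  rwa [sub_ne_zero, Ne, ← mul_eq_one_iff_eq_inv₀ hq0, ← sq]

lemma qInt_eq_pow_sub_inv_pow_div (q : k) (m : ℕ) :
    qInt q m = (q ^ m - q⁻¹ ^ m) / (q - q⁻¹) := by
  rw [qInt, zpow_neg, zpow_natCast, inv_pow]

lemma qInt_eq_zero_of_pow_two_mul_eq_one {m : ℕ} (hq : q ^ (2 * m) = 1) : qInt q m = 0 := by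
  have hinv : q⁻¹ ^ m = q ^ m := by
    rw [inv_pow]
    exact inv_eq_of_mul_eq_one_right (by rw [← pow_add, ← two_mul, hq])
  rw [qInt_eq_pow_sub_inv_pow_div, hinv, sub_self, zero_div]

lemma qInt_two_mul_add_one_of_sq_eq_neg_one (hq2 : q ^ 2 ≠ 1) (hq : q ^ 2 = -1) (i : ℕ) :
    qInt q (2 * i + 1) = (-1) ^ i := by
  have hinv : q⁻¹ = -q := inv_eq_of_mul_eq_one_right (by linear_combination -hq)
  have hq0 : q ≠ 0 := by
    rintro rfl
    simp at hq
  have hpow (x : k) (hx : x ^ 2 = -1) : x ^ (2 * i + 1) = (-1) ^ i * x := by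
    rw [pow_succ, pow_mul, hx]
  rw [qInt_eq_pow_sub_inv_pow_div, div_eq_iff (sub_inv_ne_zero_of_sq_ne_one hq0 hq2),
    hpow q hq, hpow q⁻¹ (by rw [hinv, neg_sq, hq]), mul_sub]

lemma sum_sq_qInt_odd_of_sq_eq_neg_one (hq2 : q ^ 2 ≠ 1) (hq : q ^ 2 = -1) (n : ℕ) :
    ∑ i ∈ Finset.range n, qInt q (2 * i + 1) ^ 2 = n := by
  simp [qInt_two_mul_add_one_of_sq_eq_neg_one hq2 hq, ← pow_mul]

lemma sum_odd_pow_add_inv_pow (hq0 : q ≠ 0) (hq2 : q ^ 2 ≠ 1) (n : ℕ) :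
    ∑ i ∈ Finset.range n, (q ^ (2 * i + 1) + q⁻¹ ^ (2 * i + 1)) = qInt q (2 * n) := by
  have htelescope (i : ℕ) : (q ^ (2 * i + 1) + q⁻¹ ^ (2 * i + 1)) * (q - q⁻¹) =
      (q ^ (2 * (i + 1)) - q⁻¹ ^ (2 * (i + 1))) - (q ^ (2 * i) - q⁻¹ ^ (2 * i)) := by
    linear_combination (q⁻¹ ^ (2 * i) - q ^ (2 * i)) * mul_inv_cancel₀ hq0
  rw [qInt_eq_pow_sub_inv_pow_div, eq_div_iff (sub_inv_ne_zero_of_sq_ne_one hq0 hq2),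
    Finset.sum_mul, Finset.sum_congr rfl fun i _ => htelescope i,
    Finset.sum_range_sub fun i => q ^ (2 * i) - q⁻¹ ^ (2 * i)]
  simp only [mul_zero, pow_zero, sub_self, sub_zero]

lemma sq_qInt (hq0 : q ≠ 0) (m : ℕ) :
    qInt q m ^ 2 = ((q ^ 2) ^ m + (q ^ 2)⁻¹ ^ m - 2) / (q - q⁻¹) ^ 2 := by
  have hcross : q ^ m * q⁻¹ ^ m = 1 := by rw [← mul_pow, mul_inv_cancel₀ hq0, one_pow]
  rw [qInt_eq_pow_sub_inv_pow_div, div_pow, ← inv_pow, pow_right_comm q, pow_right_comm q⁻¹]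
  congr 1
  linear_combination -2 * hcross

lemma sum_sq_qInt_odd (hq0 : q ≠ 0) (hq4 : q ^ 4 ≠ 1) (n : ℕ) :
    ∑ i ∈ Finset.range n, qInt q (2 * i + 1) ^ 2 =
      (qInt (q ^ 2) (2 * n) - 2 * n) / (q - q⁻¹) ^ 2 := by
  have hsq : (q ^ 2) ^ 2 ≠ 1 := by rwa [← pow_mul]
  simp only [sq_qInt hq0]
  rw [← Finset.sum_div, Finset.sum_sub_distrib, sum_odd_pow_add_inv_pow (pow_ne_zero 2 hq0) hsq,
    Finset.sum_const, Finset.card_range, nsmul_eq_mul, mul_comm (n : k)]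

end QuantumIntegers

/-- Computation of the formal codegree `Σ_{i=0}^{l} [2i+1]_q²`. -/
theorem formal_codegree_qInt (k : Type*) [Field k] (q : k) (hq0 : q ≠ 0)
    (hq2 : q ^ 2 ≠ 1) (l : ℕ) (hl : 2 ≤ l) (hq4l : q ^ (4 * (l + 1)) = 1) :
    (q ^ 2 = -1 →
      ∑ i ∈ Finset.range (l + 1), (qInt q (2 * i + 1)) ^ 2 = ((l + 1 : ℕ) : k)) ∧
    (q ^ 4 ≠ 1 →
      ∑ i ∈ Finset.range (l + 1), (qInt q (2 * i + 1)) ^ 2 =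
        -(2 * ((l + 1 : ℕ) : k)) / (q - q⁻¹) ^ 2) := by
  refine ⟨fun hq => sum_sq_qInt_odd_of_sq_eq_neg_one hq2 hq (l + 1), fun hq4 => ?_⟩
  have hroot : (q ^ 2) ^ (2 * (2 * (l + 1))) = 1 := by
    linear_combination (q ^ (4 * (l + 1)) + 1) * hq4l
  have hvanish : qInt (q ^ 2) (2 * (l + 1)) = 0 := qInt_eq_zero_of_pow_two_mul_eq_one hroot
  rw [sum_sq_qInt_odd hq0 hq4, hvanish, zero_sub]
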